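/- arXiv:2210.03547 — 2 statements merged into one kernel-verified Lean document; each statement's English description precedes it below -/
import Mathlib

section
/- Let μ be a σ-finite measure on a measurable space 𝒯, let r ≥ 3 be a natural number, let a ≤ c be reals, and let F, f : ℝ × 𝒯 → ℝ be measurable functions such that for every τ, the function x ↦ F(x,τ) has derivative f(x,τ) at every x ∈ [a,c] and F(a,τ) = 0. Let g : 𝒯 → ℝ be measurable and suppose the function (x,τ) ↦ g(τ)·(r−2)·f(x,τ)·F(x,τ)^{r−3} is integrable on [a,c] × 𝒯 with respect to the product of Lebesgue measure and μ. Assume the completeness condition: for any such g, if ∫_𝒯 g(τ)·F(x,τ)^{r−2} dμ(τ) = 0 for all x ∈ [a,c], then g = 0 μ-almost everywhere. Then the family of top-order-statistic densities is complete: if ∫_𝒯 g(τ)·(r−2)·f(x,τ)·F(x,τ)^{r−3} dμ(τ) = 0 for all x ∈ [a,c], it follows that g = 0 μ-almost everywhere. -/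
open MeasureTheory

/-- Completeness of the family of top-order-statistic densities, derived from
completeness of the family `{F(·,τ)^(r-2)}`. -/
theorem stmt0 {𝒯 : Type*} [MeasurableSpace 𝒯] (μ : Measure 𝒯) [SigmaFinite μ]
    (r : ℕ) (hr : 3 ≤ r) (a c : ℝ) (hac : a ≤ c)
    (F f : ℝ × 𝒯 → ℝ) (hFmeas : Measurable F) (hfmeas : Measurable f)
    (hderiv : ∀ τ : 𝒯, ∀ x ∈ Set.Icc a c, HasDerivAt (fun u => F (u, τ)) (f (x, τ)) x)
    (hFa : ∀ τ : 𝒯, F (a, τ) = 0)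
    (hcomplete : ∀ g : 𝒯 → ℝ, Measurable g →
      Integrable (fun q : ℝ × 𝒯 =>
        g q.2 * ((r : ℝ) - 2) * f (q.1, q.2) * F (q.1, q.2) ^ (r - 3))
        ((volume.restrict (Set.Icc a c)).prod μ) →
      (∀ x ∈ Set.Icc a c, ∫ τ, g τ * F (x, τ) ^ (r - 2) ∂μ = 0) →
      g =ᵐ[μ] 0)
    (g : 𝒯 → ℝ) (hg : Measurable g)
    (hint : Integrable (fun q : ℝ × 𝒯 =>
      g q.2 * ((r : ℝ) - 2) * f (q.1, q.2) * F (q.1, q.2) ^ (r - 3))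
      ((volume.restrict (Set.Icc a c)).prod μ))
    (hzero : ∀ x ∈ Set.Icc a c,
      ∫ τ, g τ * ((r : ℝ) - 2) * f (x, τ) * F (x, τ) ^ (r - 3) ∂μ = 0) :
    g =ᵐ[μ] 0 := by
  refine hcomplete g hg hint ?_
  intro x hx
  obtain ⟨n, rfl⟩ : ∃ n, r = n + 3 := ⟨r - 3, by omega⟩
  have e2 : n + 3 - 2 = n + 1 := by omega
  have e3 : n + 3 - 3 = n := by omega
  rw [e3] at hint
  simp only [e3] at hzero
  rw [e2]
  have hsub : Set.Ioc a x ⊆ Set.Icc a c := fun y hy => ⟨hy.1.le, hy.2.trans hx.2⟩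
  have hint' : Integrable (fun q : ℝ × 𝒯 =>
      g q.2 * (((n + 3 : ℕ) : ℝ) - 2) * f (q.1, q.2) * F (q.1, q.2) ^ n)
      ((volume.restrict (Set.Ioc a x)).prod μ) := by
    refine hint.mono_measure ?_
    exact Measure.prod_mono (Measure.restrict_mono hsub le_rfl) le_rfl
  have hae : ∀ᵐ τ ∂μ, g τ * F (x, τ) ^ (n + 1) =
      ∫ y in Set.Ioc a x, g τ * (((n + 3 : ℕ) : ℝ) - 2) * f (y, τ) * F (y, τ) ^ n := by
    filter_upwards [hint'.prod_left_ae] with τ hτ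
    rw [← intervalIntegral.integral_of_le hx.1]
    rw [intervalIntegral.integral_eq_sub_of_hasDerivAt
      (f := fun y => g τ * F (y, τ) ^ (n + 1))]
    · simp [hFa]
    · intro y hy
      rw [Set.uIcc_of_le hx.1] at hy
      have h := ((hderiv τ y ⟨hy.1, hy.2.trans hx.2⟩).fun_pow (n + 1)).const_mul (g τ)
      have he : g τ * (((n + 3 : ℕ) : ℝ) - 2) * f (y, τ) * F (y, τ) ^ n =
          g τ * (((n + 1 : ℕ) : ℝ) * F (y, τ) ^ (n + 1 - 1) * f (y, τ)) := by
        rw [Nat.add_sub_cancel]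
        push_cast
        ring
      rw [he]
      exact h
    · rw [intervalIntegrable_iff_integrableOn_Ioc_of_le hx.1]
      exact hτ
  rw [integral_congr_ae hae, ← integral_integral_swap hint']
  rw [setIntegral_congr_fun measurableSet_Ioc (g := fun _ => (0 : ℝ))
    (fun y hy => hzero y (hsub hy))]
  simp
end

section
/- Let μ be a finite (e.g., probability or Lebesgue-type) measure on ℝ, and let q₁, q₂ : ℝ → ℝ be monotone nondecreasing functions. If the pushforward measures satisfy μ ∘ q₁⁻¹ = μ ∘ q₂⁻¹ (i.e., Measure.map q₁ μ = Measure.map q₂ μ), then q₁ = q₂ μ-almost everywhere. -/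
open MeasureTheory

/-- A monotone nondecreasing function is determined `μ`-almost everywhere by its
distribution (pushforward) under `μ`. -/
theorem stmt14 (μ : Measure ℝ) [IsFiniteMeasure μ] (q₁ q₂ : ℝ → ℝ)
    (h₁ : Monotone q₁) (h₂ : Monotone q₂)
    (h : Measure.map q₁ μ = Measure.map q₂ μ) :
    q₁ =ᵐ[μ] q₂ := by
  have key : ∀ r : ℚ, ∀ᵐ x ∂μ, (q₁ x ≤ (r : ℝ) ↔ q₂ x ≤ (r : ℝ)) := by
    intro r
    have m₁ : MeasurableSet (q₁ ⁻¹' Set.Iic (r : ℝ)) := h₁.measurable measurableSet_Iic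
    have m₂ : MeasurableSet (q₂ ⁻¹' Set.Iic (r : ℝ)) := h₂.measurable measurableSet_Iic
    have e : μ (q₁ ⁻¹' Set.Iic (r : ℝ)) = μ (q₂ ⁻¹' Set.Iic (r : ℝ)) := by
      rw [← Measure.map_apply h₁.measurable measurableSet_Iic, h,
        Measure.map_apply h₂.measurable measurableSet_Iic]
    have l₁ : IsLowerSet (q₁ ⁻¹' Set.Iic (r : ℝ)) := fun a b hab ha => (h₁ hab).trans ha
    have l₂ : IsLowerSet (q₂ ⁻¹' Set.Iic (r : ℝ)) := fun a b hab ha => (h₂ hab).trans ha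
    have ae : q₁ ⁻¹' Set.Iic (r : ℝ) =ᵐ[μ] q₂ ⁻¹' Set.Iic (r : ℝ) := by
      rcases l₁.total l₂ with hs | hs
      · exact ae_eq_of_subset_of_measure_ge hs e.ge m₁.nullMeasurableSet (measure_ne_top _ _)
      · exact (ae_eq_of_subset_of_measure_ge hs e.le m₂.nullMeasurableSet
          (measure_ne_top _ _)).symm
    filter_upwards [ae.mem_iff] with x hx
    exact hx
  filter_upwards [ae_all_iff.2 key] with x hx
  rcases lt_trichotomy (q₁ x) (q₂ x) with hl | he | hl
  · obtain ⟨r, hr, hr'⟩ := exists_rat_btwn hl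
    exact absurd ((hx r).1 hr.le) (not_le.2 hr')
  · exact he
  · obtain ⟨r, hr, hr'⟩ := exists_rat_btwn hl
    exact absurd ((hx r).2 hr.le) (not_le.2 hr')
end
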